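/- arXiv:1110.1014 — 2 statements merged into one kernel-verified Lean document; each statement's English description precedes it below -/
import Mathlib

section
/- Let K be a bounded d-dimensional maximal lattice-free set in ℝ^d. Then K is a polytope, i.e., K is the convex hull of finitely many points (equivalently, a bounded intersection of finitely many closed halfspaces). -/
open Pointwise

/-- The standard integer lattice `ℤ^d` viewed as a subset of `ℝ^d`. -/
def intLattice (d : ℕ) : Set (Fin d → ℝ) :=
  Set.range (fun z : Fin d → ℤ => fun i => (z i : ℝ))

/-- A set `K ⊆ ℝ^d` is lattice-free if it is closed, convex, and its interior
contains no point of `ℤ^d`. -/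
def IsLatticeFree (d : ℕ) (K : Set (Fin d → ℝ)) : Prop :=
  IsClosed K ∧ Convex ℝ K ∧ interior K ∩ intLattice d = ∅

/-- A lattice-free set is maximal if it is not properly contained in another
lattice-free set. -/
def IsMaxLatticeFree (d : ℕ) (K : Set (Fin d → ℝ)) : Prop :=
  IsLatticeFree d K ∧ ∀ K' : Set (Fin d → ℝ), IsLatticeFree d K' → K ⊆ K' → K' = K

/-- The recession cone of `K`: all vectors `u` with `K + u ⊆ K`. -/
def recCone (d : ℕ) (K : Set (Fin d → ℝ)) : Set (Fin d → ℝ) :=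
  {u | ∀ x ∈ K, x + u ∈ K}

/-- A polyhedron: an intersection of finitely many closed halfspaces. -/
def IsPolyhedron (d : ℕ) (K : Set (Fin d → ℝ)) : Prop :=
  ∃ (n : ℕ) (a : Fin n → (Fin d → ℝ)) (b : Fin n → ℝ),
    K = {x | ∀ i, ∑ j, a i j * x j ≤ b i}

/-- A polytope: the convex hull of finitely many points. -/
def IsPolytope (d : ℕ) (K : Set (Fin d → ℝ)) : Prop :=
  ∃ s : Finset (Fin d → ℝ), K = convexHull ℝ (s : Set (Fin d → ℝ))

/-- A facet of a `d`-dimensional convex set `K ⊆ ℝ^d`: a nonempty convex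
(extreme) face of dimension `d - 1`. -/
def IsFacet (d : ℕ) (K F : Set (Fin d → ℝ)) : Prop :=
  F.Nonempty ∧ IsExtreme ℝ K F ∧ Convex ℝ F ∧
    Module.finrank ℝ (affineSpan ℝ F).direction + 1 = d

/-!
Enclose the bounded set `K` in a bounded polyhedron `Q`. The forbidden points, here those of `ℤ^d`,
form a closed discrete set, so only finitely many of them lie in `Q`. None of them is interior to
`K`, so each one admits a half-space containing `K` with that point outside its interior. Cutting
`Q` by these half-spaces gives a bounded polyhedron that contains `K` and has no forbidden interior
point, so by maximality it equals `K`. Finally, an extreme point of a polyhedron is determined by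
the set of its active constraints, so there are finitely many of them, and Krein–Milman makes the
bounded polyhedron `K` a polytope.
-/

open Bornology Filter Set Topology

section PolyhedralSet

variable {E : Type*} [AddCommGroup E] [Module ℝ E] [TopologicalSpace E]

lemma notMem_interior_of_forall_le [ContinuousAdd E] [ContinuousSMul ℝ E] {P : Set E}
    {f : StrongDual ℝ E} (hf : f ≠ 0) {z : E} (hP : ∀ x ∈ P, f x ≤ f z) : z ∉ interior P := by
  intro hz
  have himage : f '' P ⊆ Iic (f z) := image_subset_iff.2 hP
  have hfz : f z ∈ interior (Iic (f z)) :=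
    interior_mono himage
      ((f.isOpenMap_of_ne_zero hf).image_interior_subset P (mem_image_of_mem f hz))
  rw [interior_Iic, mem_Iio] at hfz
  exact lt_irrefl _ hfz

/-- Coordinate-free polyhedra: intersections of finitely many closed half-spaces `f x ≤ c`, each
encoded by the pair `(f, c)`. -/
def IsPolyhedralSet (P : Set E) : Prop :=
  ∃ H : Set (StrongDual ℝ E × ℝ), H.Finite ∧ P = {x | ∀ h ∈ H, h.1 x ≤ h.2}

lemma eventually_add_smul_mem_of_active_eq_zero {H : Set (StrongDual ℝ E × ℝ)} (hH : H.Finite)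
    {x v : E} (hx : ∀ h ∈ H, h.1 x ≤ h.2) (hv : ∀ h ∈ H, h.1 x = h.2 → h.1 v = 0) :
    ∀ᶠ ε in 𝓝 (0 : ℝ), ∀ h ∈ H, h.1 (x + ε • v) ≤ h.2 := by
  refine (eventually_all_finite hH).2 fun h hh => ?_
  simp only [map_add, map_smul, smul_eq_mul]
  obtain hactive | hslack := (hx h hh).eq_or_lt
  · simp [hactive, hv h hh hactive]
  · have hcont : Tendsto (fun ε : ℝ => h.1 x + ε * h.1 v) (𝓝 0) (𝓝 (h.1 x)) :=
      Continuous.tendsto' (by fun_prop) _ _ (by simp)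
    exact (hcont.eventually_lt_const hslack).mono fun _ => le_of_lt

lemma eq_zero_of_mem_extremePoints_of_active_eq_zero {H : Set (StrongDual ℝ E × ℝ)}
    (hH : H.Finite) {x v : E} (hx : x ∈ extremePoints ℝ {x | ∀ h ∈ H, h.1 x ≤ h.2})
    (hv : ∀ h ∈ H, h.1 x = h.2 → h.1 v = 0) : v = 0 := by
  have hadd := eventually_add_smul_mem_of_active_eq_zero hH hx.1 hv
  have hsub := eventually_add_smul_mem_of_active_eq_zero (v := -v) hH hx.1
    fun h hh hactive => by simp [hv h hh hactive]
  obtain ⟨ε, ⟨hεadd, hεsub⟩, hε⟩ :=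
    (((hadd.and hsub).filter_mono nhdsWithin_le_nhds).and
      (self_mem_nhdsWithin : {0}ᶜ ∈ 𝓝[≠] (0 : ℝ))).exists
  rw [smul_neg, ← sub_eq_add_neg] at hεsub
  have hfixed : x - ε • v = x := hx.2 hεsub hεadd (mem_openSegment_sub_add _ _)
  exact (smul_eq_zero.1 (sub_eq_self.1 hfixed)).resolve_left hε

namespace IsPolyhedralSet

lemma halfSpace (f : StrongDual ℝ E) (c : ℝ) : IsPolyhedralSet {x | f x ≤ c} :=
  ⟨{(f, c)}, finite_singleton _, by simp⟩

lemma biInter {ι : Type*} {s : Set ι} (hs : s.Finite) {P : ι → Set E}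
    (hP : ∀ i ∈ s, IsPolyhedralSet (P i)) : IsPolyhedralSet (⋂ i ∈ s, P i) := by
  choose! H hfin hPH using hP
  refine ⟨⋃ i ∈ s, H i, hs.biUnion hfin, ?_⟩
  rw [iInter₂_congr hPH]
  ext x
  simp only [mem_iInter, mem_iUnion, mem_ofPred_eq, exists_prop]
  exact ⟨fun hx h ⟨i, hi, hh⟩ => hx i hi h hh, fun hx i hi h hh => hx h ⟨i, hi, hh⟩⟩

lemma inter {P Q : Set E} (hP : IsPolyhedralSet P) (hQ : IsPolyhedralSet Q) :
    IsPolyhedralSet (P ∩ Q) := by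
  obtain ⟨H, hH, rfl⟩ := hP
  obtain ⟨G, hG, rfl⟩ := hQ
  exact ⟨H ∪ G, hH.union hG, by ext x; simp [or_imp, forall_and]⟩

lemma isClosed {P : Set E} (hP : IsPolyhedralSet P) : IsClosed P := by
  obtain ⟨H, -, rfl⟩ := hP
  simp only [ofPred_forall]
  exact isClosed_biInter fun h _ => isClosed_le h.1.continuous continuous_const

lemma convex {P : Set E} (hP : IsPolyhedralSet P) : Convex ℝ P := by
  obtain ⟨H, -, rfl⟩ := hP
  simp only [ofPred_forall]
  exact convex_iInter₂ fun h _ => convex_halfSpace_le h.1.isLinear h.2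

lemma finite_extremePoints {P : Set E} (hP : IsPolyhedralSet P) : (extremePoints ℝ P).Finite := by
  obtain ⟨H, hH, rfl⟩ := hP
  let active : E → Set (StrongDual ℝ E × ℝ) := fun x => {h ∈ H | h.1 x = h.2}
  refine Finite.of_injOn (f := active) (fun x _ => sep_subset _ _) ?_ hH.finite_subsets
  intro x hx y _ hxy
  refine sub_eq_zero.1 (eq_zero_of_mem_extremePoints_of_active_eq_zero hH hx fun h hh hhx => ?_)
  have hhy : h ∈ active y := hxy ▸ ⟨hh, hhx⟩
  rw [map_sub, hhx, hhy.2, sub_self]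

lemma exists_finset_eq_convexHull [IsTopologicalAddGroup E] [ContinuousSMul ℝ E] [T2Space E]
    [LocallyConvexSpace ℝ E] {P : Set E} (hP : IsPolyhedralSet P) (hcompact : IsCompact P) :
    ∃ s : Finset E, P = convexHull ℝ (s : Set E) := by
  refine ⟨hP.finite_extremePoints.toFinset, ?_⟩
  rw [hP.finite_extremePoints.coe_toFinset,
    ← (hP.finite_extremePoints.isClosed_convexHull (𝕜 := ℝ)).closure_eq,
    closure_convexHull_extremePoints hcompact hP.convex]

end IsPolyhedralSet

end PolyhedralSet

section FiniteDimensional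

variable {E : Type*} [NormedAddCommGroup E] [NormedSpace ℝ E] [FiniteDimensional ℝ E]

lemma exists_ne_zero_forall_eq_of_affineSpan_ne_top {K : Set E} (hne : K.Nonempty)
    (hK : affineSpan ℝ K ≠ ⊤) :
    ∃ f : StrongDual ℝ E, f ≠ 0 ∧ ∀ x ∈ K, ∀ y ∈ K, f x = f y := by
  have hspan : vectorSpan ℝ K < ⊤ := lt_top_iff_ne_top.2 fun h =>
    hK ((AffineSubspace.affineSpan_eq_top_iff_vectorSpan_eq_top_of_nonempty ℝ E E hne).2 h)
  obtain ⟨f, hf, hker⟩ := Submodule.exists_le_ker_of_lt_top _ hspan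
  refine ⟨f.toContinuousLinearMap, by simpa using hf, fun x hx y hy => ?_⟩
  have hxy : f (x - y) = 0 := hker (vsub_mem_vectorSpan ℝ hx hy)
  exact sub_eq_zero.1 ((map_sub f x y).symm.trans hxy)

lemma exists_ne_zero_forall_le_of_notMem_interior {K : Set E} (hK : Convex ℝ K)
    (hne : K.Nonempty) {z : E} (hz : z ∉ interior K) :
    ∃ f : StrongDual ℝ E, f ≠ 0 ∧ ∀ x ∈ K, f x ≤ f z := by
  by_cases hspan : affineSpan ℝ K = ⊤
  · exact geometric_hahn_banach_of_nonempty_interior_point hK hz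
      (hK.interior_nonempty_iff_affineSpan_eq_top.2 hspan)
  · obtain ⟨f, hf, hconst⟩ := exists_ne_zero_forall_eq_of_affineSpan_ne_top hne hspan
    obtain ⟨x₀, hx₀⟩ := hne
    obtain hle | hle := le_total (f x₀) (f z)
    · exact ⟨f, hf, fun x hx => (hconst x hx x₀ hx₀).trans_le hle⟩
    · exact ⟨-f, neg_ne_zero.2 hf, fun x hx => neg_le_neg (hle.trans_eq (hconst x₀ hx₀ x hx))⟩

lemma exists_isPolyhedralSet_superset_disjoint_interior {K F : Set E} (hK : Convex ℝ K)
    (hne : K.Nonempty) (hF : F.Finite) (hKF : Disjoint (interior K) F) :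
    ∃ P, IsPolyhedralSet P ∧ K ⊆ P ∧ Disjoint (interior P) F := by
  have hsupport : ∀ z ∈ F, ∃ f : StrongDual ℝ E, f ≠ 0 ∧ ∀ x ∈ K, f x ≤ f z := fun z hz =>
    exists_ne_zero_forall_le_of_notMem_interior hK hne (disjoint_right.1 hKF hz)
  choose! f hf hfK using hsupport
  refine ⟨⋂ z ∈ F, {x | f z x ≤ f z z}, .biInter hF fun z _ => .halfSpace _ _,
    fun x hx => mem_iInter₂.2 fun z hz => hfK z hz x hx, disjoint_right.2 fun z hz => ?_⟩
  exact notMem_interior_of_forall_le (hf z hz) fun x hx => mem_iInter₂.1 hx z hz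

lemma exists_isPolyhedralSet_isBounded_superset {K : Set E} (hK : IsBounded K) :
    ∃ Q, IsPolyhedralSet Q ∧ IsBounded Q ∧ K ⊆ Q := by
  let e := (Module.finBasis ℝ E).equivFunL
  let coord i : StrongDual ℝ E :=
    (ContinuousLinearMap.proj (φ := fun _ => ℝ) i).comp e.toContinuousLinearMap
  obtain ⟨⟨a, ha⟩, b, hb⟩ :=
    isBounded_iff_bddBelow_bddAbove.1 (e.lipschitz.isBounded_image hK)
  refine ⟨e ⁻¹' Icc a b, ?_, e.antilipschitz.isBounded_preimage (Metric.isBounded_Icc a b),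
    fun x hx => ⟨ha (mem_image_of_mem e hx), hb (mem_image_of_mem e hx)⟩⟩
  have hbox : e ⁻¹' Icc a b =
      ⋂ i ∈ univ, {x | (-coord i) x ≤ -a i} ∩ {x | coord i x ≤ b i} := by
    ext x
    simp [coord, Pi.le_def, forall_and]
  rw [hbox]
  exact .biInter finite_univ fun i _ => .inter (.halfSpace _ _) (.halfSpace _ _)

end FiniteDimensional

/-- The `Λ`-free sets of integer programming, for an arbitrary set `Λ` of forbidden points in place
of the integer lattice. -/
def IsConvexFree {E : Type*} [AddCommGroup E] [Module ℝ E] [TopologicalSpace E]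
    (Λ K : Set E) : Prop :=
  IsClosed K ∧ Convex ℝ K ∧ interior K ∩ Λ = ∅

lemma isClosedEmbedding_intCast_pi (ι : Type*) :
    IsClosedEmbedding (fun (z : ι → ℤ) i => (z i : ℝ)) :=
  .piMap fun _ => Int.isClosedEmbedding_coe_real

theorem stmt_14_general {E : Type*} [NormedAddCommGroup E] [NormedSpace ℝ E]
    [FiniteDimensional ℝ E] {Λ K : Set E} (hclosed : IsClosed Λ) (hdiscrete : IsDiscrete Λ)
    (hK : Maximal (IsConvexFree Λ) K) (hbd : IsBounded K) :
    ∃ s : Finset E, K = convexHull ℝ (s : Set E) := by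
  obtain rfl | hne := K.eq_empty_or_nonempty
  · exact ⟨∅, by simp⟩
  have : ProperSpace E := FiniteDimensional.proper_real E
  obtain ⟨-, hconv, hfree⟩ := hK.prop
  obtain ⟨Q, hQ, hQbd, hKQ⟩ := exists_isPolyhedralSet_isBounded_superset hbd
  obtain ⟨P, hP, hKP, hPfree⟩ := exists_isPolyhedralSet_superset_disjoint_interior hconv hne
    (Metric.finite_isBounded_inter_isClosed hdiscrete hQbd hclosed)
    ((disjoint_iff_inter_eq_empty.2 hfree).mono_right inter_subset_right)
  have hPQ : IsPolyhedralSet (P ∩ Q) := hP.inter hQ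
  have hPQfree : interior (P ∩ Q) ∩ Λ = ∅ := eq_empty_of_forall_notMem fun z ⟨hz, hzΛ⟩ =>
    disjoint_left.1 hPfree (interior_mono inter_subset_left hz) ⟨(interior_subset hz).2, hzΛ⟩
  obtain rfl : K = P ∩ Q :=
    hK.eq_of_subset ⟨hPQ.isClosed, hPQ.convex, hPQfree⟩ (subset_inter hKP hKQ)
  exact hPQ.exists_finset_eq_convexHull (Metric.isCompact_of_isClosed_isBounded hPQ.isClosed hbd)

/-- A bounded `d`-dimensional maximal lattice-free set in `ℝ^d`
is a polytope. -/
theorem stmt_14 (d : ℕ) (K : Set (Fin d → ℝ))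
    (hK : IsMaxLatticeFree d K) (hdim : affineSpan ℝ K = ⊤)
    (hbd : Bornology.IsBounded K) :
    IsPolytope d K := by
  have hℤ := isClosedEmbedding_intCast_pi (Fin d)
  exact stmt_14_general hℤ.isClosed_range hℤ.isInducing.isDiscrete_range
    ⟨hK.1, fun K' hK' hKK' => (hK.2 K' hK' hKK').le⟩ hbd
end

section
/- Let K be a bounded d-dimensional maximal lattice-free set in ℝ^d. Then K is a polytope with at most 2^d facets. -/
open Pointwise

open scoped Topology

/-!
Among the finite systems of linear inequalities that hold on `K` and are not all strict at any
lattice point of a large ball, take a minimal one, `S`. A convex set containing `K` that agrees with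
`K` in the ball is equal to `K`, so by maximality every such system cuts out exactly `K`. Minimality
means that for each inequality of `S` there are lattice points which it alone excludes; relaxing it
until it meets the first of them leaves `K` unchanged, so that point already lies on its hyperplane.
Two such points, for different inequalities, cannot be congruent modulo 2, for otherwise their
midpoint would be a lattice point in the interior of `K`. Hence `S` has at most `2^d` inequalities,
and every facet of `K` is cut out by one of them.
-/

section HalfspaceInter

variable {E : Type*} [AddCommGroup E] [Module ℝ E] [TopologicalSpace E]
  {S : Finset (StrongDual ℝ E × ℝ)} {x : E}

/-- The polyhedron cut out by a finite system `S` of linear inequalities, where a pair `(f, c)`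
stands for the inequality `f x ≤ c`. -/
def halfspaceInter (S : Finset (StrongDual ℝ E × ℝ)) : Set E :=
  {x | ∀ p ∈ S, p.1 x ≤ p.2}

/-- The face of `halfspaceInter S` on which the inequality `p` is an equality. -/
def tightFace (S : Finset (StrongDual ℝ E × ℝ)) (p : StrongDual ℝ E × ℝ) : Set E :=
  halfspaceInter S ∩ {x | p.1 x = p.2}

theorem isClosed_halfspaceInter (S : Finset (StrongDual ℝ E × ℝ)) :
    IsClosed (halfspaceInter S) := by
  simp only [halfspaceInter, Set.ofPred_forall]
  exact isClosed_biInter fun p _ => isClosed_le p.1.continuous continuous_const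

theorem convex_halfspaceInter (S : Finset (StrongDual ℝ E × ℝ)) :
    Convex ℝ (halfspaceInter S) := by
  simp only [halfspaceInter, Set.ofPred_forall]
  exact convex_iInter₂ fun p _ => convex_halfSpace_le p.1.toLinearMap.isLinear p.2

theorem mem_interior_halfspaceInter_of_forall_lt (hx : ∀ p ∈ S, p.1 x < p.2) :
    x ∈ interior (halfspaceInter S) := by
  have hev : ∀ᶠ y in 𝓝 x, ∀ p ∈ S, p.1 y < p.2 := (Finset.eventually_all S).2 fun p hp =>
    (p.1.continuous.tendsto x).eventually_lt_const (hx p hp)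
  exact mem_interior_iff_mem_nhds.2 (hev.mono fun y hy p hp => (hy p hp).le)

theorem lt_of_mem_interior_halfspaceInter [ContinuousAdd E] [ContinuousSMul ℝ E]
    (hx : x ∈ interior (halfspaceInter S)) {p : StrongDual ℝ E × ℝ} (hp : p ∈ S)
    (hp0 : p.1 ≠ 0) : p.1 x < p.2 := by
  have hsub : interior (halfspaceInter S) ⊆ interior (p.1 ⁻¹' Set.Iic p.2) :=
    interior_mono fun y hy => hy p hp
  rw [← (p.1.isOpenMap_of_ne_zero hp0).preimage_interior_eq_interior_preimage p.1.continuous,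
    interior_Iic] at hsub
  exact hsub hx

end HalfspaceInter

section Faces

variable {E : Type*} [AddCommGroup E] [Module ℝ E] {A F s : Set E} {x y : E}

theorem mem_of_isExtreme_of_lineMap_mem (hF : IsExtreme ℝ A F) (hx : x ∈ F) (hy : y ∈ A) {t : ℝ}
    (ht : 1 < t) (hmem : AffineMap.lineMap y x t ∈ A) : y ∈ F := by
  refine hF.2 hy hmem hx ?_
  rw [openSegment_eq_image_lineMap]
  refine ⟨t⁻¹, ⟨by positivity, inv_lt_one_of_one_lt₀ ht⟩, ?_⟩
  rw [AffineMap.lineMap_lineMap_right, inv_mul_cancel₀ (by positivity), AffineMap.lineMap_apply_one]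

variable [TopologicalSpace E] [IsTopologicalAddGroup E] [ContinuousSMul ℝ E]

theorem exists_one_lt_lineMap_mem (hx : x ∈ intrinsicInterior ℝ s) (hy : y ∈ affineSpan ℝ s) :
    ∃ t : ℝ, 1 < t ∧ AffineMap.lineMap y x t ∈ s := by
  obtain ⟨x, hx, rfl⟩ := hx
  let line : ℝ → affineSpan ℝ s := fun t =>
    ⟨AffineMap.lineMap y (x : E) t, AffineMap.lineMap_mem t hy x.2⟩
  have hline : Continuous line := AffineMap.lineMap_continuous.subtype_mk _
  have hline_one : line 1 = x := Subtype.ext (AffineMap.lineMap_apply_one _ _)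
  have hev : ∀ᶠ t in 𝓝 1, (line t : E) ∈ s :=
    hline.continuousAt.eventually_mem (by rwa [hline_one, ← mem_interior_iff_mem_nhds])
  exact ((eventually_mem_nhdsWithin (s := Set.Ioi 1)).and
    (hev.filter_mono nhdsWithin_le_nhds)).exists

theorem inter_affineSpan_subset_of_isExtreme (hF : IsExtreme ℝ A F) (hs : s ⊆ A)
    (hxF : x ∈ F) (hx : x ∈ intrinsicInterior ℝ s) : A ∩ affineSpan ℝ s ⊆ F := by
  rintro y ⟨hyA, hys⟩
  obtain ⟨t, ht, hmem⟩ := exists_one_lt_lineMap_mem hx hys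
  exact mem_of_isExtreme_of_lineMap_mem hF hxF hyA ht (hs hmem)

theorem eq_of_le_of_eq_of_mem_intrinsicInterior {f : StrongDual ℝ E} {c : ℝ}
    (hf : ∀ y ∈ s, f y ≤ c) (hx : x ∈ intrinsicInterior ℝ s) (hxc : f x = c) :
    ∀ y ∈ s, f y = c := by
  intro y hy
  obtain ⟨t, ht, hmem⟩ := exists_one_lt_lineMap_mem hx (subset_affineSpan ℝ s hy)
  have hle : f y + t * (c - f y) ≤ c := by
    simpa [AffineMap.lineMap_apply, hxc, add_comm] using hf _ hmem
  nlinarith [hf y hy]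

theorem finite_extremePoints_halfspaceInter (S : Finset (StrongDual ℝ E × ℝ)) :
    ((halfspaceInter S).extremePoints ℝ).Finite := by
  classical
  -- An extreme point is determined by the set of inequalities that are equalities there.
  refine Set.Finite.of_injOn (f := fun x => S.filter fun p => p.1 x = p.2)
    (t := S.powerset)
    (fun x _ => Finset.mem_powerset.2 (Finset.filter_subset _ _)) ?_ S.powerset.finite_toSet
  intro x hx y hy hxy
  have hactive : ∀ p ∈ S, p.1 x = p.2 → p.1 y = p.2 := fun p hp hpx =>
    (Finset.mem_filter.1 ((Finset.ext_iff.1 hxy p).1 (Finset.mem_filter.2 ⟨hp, hpx⟩))).2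
  let T := S.filter fun p => p.1 x ≠ p.2
  have hxT : x ∈ interior (halfspaceInter T) := mem_interior_halfspaceInter_of_forall_lt fun p hp =>
    (hx.1 p (Finset.mem_filter.1 hp).1).lt_of_ne (Finset.mem_filter.1 hp).2
  have hyT : y ∈ halfspaceInter T := fun p hp => hy.1 p (Finset.mem_filter.1 hp).1
  obtain ⟨t, ht, hmem⟩ := exists_one_lt_lineMap_mem (interior_subset_intrinsicInterior hxT)
    (subset_affineSpan ℝ _ hyT)
  refine (mem_of_isExtreme_of_lineMap_mem (isExtreme_singleton.2 hx) rfl hy.1 ht ?_).symm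
  intro p hp
  by_cases hpx : p.1 x = p.2
  · simp [AffineMap.lineMap_apply, hpx, hactive p hp hpx]
  · exact hmem p (Finset.mem_filter.2 ⟨hp, hpx⟩)

theorem exists_finset_halfspaceInter_eq_convexHull [T2Space E] [LocallyConvexSpace ℝ E]
    {S : Finset (StrongDual ℝ E × ℝ)} (hS : IsCompact (halfspaceInter S)) :
    ∃ s : Finset E, halfspaceInter S = convexHull ℝ (s : Set E) := by
  have hfin := finite_extremePoints_halfspaceInter S
  refine ⟨hfin.toFinset, ?_⟩
  rw [hfin.coe_toFinset, ← (hfin.isClosed_convexHull ℝ).closure_eq,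
    closure_convexHull_extremePoints hS (convex_halfspaceInter S)]

end Faces

section Hyperplane

variable {𝕜 V : Type*} [Field 𝕜] [AddCommGroup V] [Module 𝕜 V] [FiniteDimensional 𝕜 V]

theorem hyperplane_subset_affineSpan {f : Module.Dual 𝕜 V} (hf : f ≠ 0) {c : 𝕜} {F : Set V}
    (hF : ∀ x ∈ F, f x = c) (hne : F.Nonempty)
    (hdim : Module.finrank 𝕜 (affineSpan 𝕜 F).direction + 1 = Module.finrank 𝕜 V) :
    {x | f x = c} ⊆ affineSpan 𝕜 F := by
  obtain ⟨x, hx⟩ := hne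
  have hle : (affineSpan 𝕜 F).direction ≤ LinearMap.ker f := by
    rw [direction_affineSpan, vectorSpan_def, Submodule.span_le]
    rintro _ ⟨a, ha, b, hb, rfl⟩
    simp [hF a ha, hF b hb]
  have hker : Module.finrank 𝕜 (LinearMap.ker f) + 1 = Module.finrank 𝕜 V :=
    Module.Dual.finrank_ker_add_one_of_ne_zero hf
  have heq : (affineSpan 𝕜 F).direction = LinearMap.ker f :=
    Submodule.eq_of_le_of_finrank_eq hle (by omega)
  intro y hy
  rw [SetLike.mem_coe, ← AffineSubspace.vsub_right_mem_direction_iff_mem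
    (subset_affineSpan 𝕜 F hx), heq]
  simp [hF x hx, show f y = c from hy]

end Hyperplane

section Facets

variable {E : Type*} [NormedAddCommGroup E] [NormedSpace ℝ E] [FiniteDimensional ℝ E] {F : Set E}

theorem exists_eq_tightFace_of_isExtreme {S : Finset (StrongDual ℝ E × ℝ)}
    (hS : ∀ p ∈ S, p.1 ≠ 0) (hne : F.Nonempty) (hext : IsExtreme ℝ (halfspaceInter S) F)
    (hconv : Convex ℝ F)
    (hdim : Module.finrank ℝ (affineSpan ℝ F).direction + 1 = Module.finrank ℝ E) :
    ∃ p ∈ S, F = tightFace S p := by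
  obtain ⟨x, hx⟩ := hne.intrinsicInterior hconv
  have hxF : x ∈ F := intrinsicInterior_subset hx
  obtain ⟨p, hp, hpx⟩ : ∃ p ∈ S, p.1 x = p.2 := by
    by_contra! hlt
    have hxi : x ∈ interior (halfspaceInter S) :=
      mem_interior_halfspaceInter_of_forall_lt fun p hp => (hext.1 hxF p hp).lt_of_ne (hlt p hp)
    have hsub : halfspaceInter S ⊆ F := fun y hy => inter_affineSpan_subset_of_isExtreme hext le_rfl
      hxF (interior_subset_intrinsicInterior hxi) ⟨hy, subset_affineSpan ℝ _ hy⟩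
    have hspan : affineSpan ℝ F = ⊤ :=
      hconv.interior_nonempty_iff_affineSpan_eq_top.1 ⟨x, interior_mono hsub hxi⟩
    rw [hspan, AffineSubspace.direction_top, finrank_top] at hdim
    omega
  have hpF : ∀ y ∈ F, p.1 y = p.2 :=
    eq_of_le_of_eq_of_mem_intrinsicInterior (fun y hy => hext.1 hy p hp) hx hpx
  have hp0 : p.1.toLinearMap ≠ 0 := fun h => hS p hp (ContinuousLinearMap.coe_injective h)
  refine ⟨p, hp, Set.Subset.antisymm (fun y hy => ⟨hext.1 hy, hpF y hy⟩) fun y hy => ?_⟩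
  exact inter_affineSpan_subset_of_isExtreme hext hext.1 hxF hx
    ⟨hy.1, hyperplane_subset_affineSpan hp0 hpF hne hdim hy.2⟩

end Facets

section SeparatingSystem

variable {E : Type*} [AddCommGroup E] [Module ℝ E] [TopologicalSpace E] {K Z : Set E}
  {S : Finset (StrongDual ℝ E × ℝ)} {p : StrongDual ℝ E × ℝ}

/-- A closed convex set is `L`-free if no point of `L` lies in its interior. For `L = ℤ^d` this is
`IsLatticeFree d`; maximality is expressed by `Maximal (IsFreeConvex L)`. -/
def IsFreeConvex (L K : Set E) : Prop :=
  IsClosed K ∧ Convex ℝ K ∧ interior K ∩ L = ∅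

/-- A finite system of nontrivial linear inequalities that hold on `K`, such that no point of `Z`
satisfies all of them strictly: it cuts out a polyhedron around `K` with no point of `Z` in its
interior. -/
structure IsSeparatingSystem (K Z : Set E) (S : Finset (StrongDual ℝ E × ℝ)) : Prop where
  ne_zero : ∀ p ∈ S, p.1 ≠ 0
  subset_halfspaceInter : K ⊆ halfspaceInter S
  exists_le : ∀ z ∈ Z, ∃ p ∈ S, p.2 ≤ p.1 z

theorem exists_isSeparatingSystem [IsTopologicalAddGroup E] [ContinuousSMul ℝ E]
    (hK : Convex ℝ K) (hint : (interior K).Nonempty) (hZ : Z.Finite)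
    (hKZ : interior K ∩ Z = ∅) : ∃ S, IsSeparatingSystem K Z S := by
  classical
  have hsep : ∀ z ∈ Z, ∃ f : StrongDual ℝ E, f ≠ 0 ∧ ∀ x ∈ K, f x ≤ f z := fun z hz =>
    geometric_hahn_banach_of_nonempty_interior_point hK
      (fun hzK => Set.notMem_empty z (hKZ ▸ ⟨hzK, hz⟩)) hint
  choose! f hf0 hfK using hsep
  refine ⟨hZ.toFinset.image fun z => (f z, f z z), ?_, ?_, fun z hz => ⟨(f z, f z z), ?_, le_rfl⟩⟩
  · simpa using hf0
  · intro x hx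
    simpa [halfspaceInter] using fun z hz => hfK z hz x hx
  · exact Finset.mem_image_of_mem _ (hZ.mem_toFinset.2 hz)

theorem exists_mem_forall_lt_of_minimal [DecidableEq (StrongDual ℝ E × ℝ)]
    (hS : Minimal (IsSeparatingSystem K Z) S) (hp : p ∈ S) :
    ∃ z ∈ Z, ∀ q ∈ S.erase p, q.1 z < q.2 := by
  by_contra! hZ
  have herase : IsSeparatingSystem K Z (S.erase p) :=
    ⟨fun q hq => hS.prop.ne_zero q (Finset.mem_of_mem_erase hq),
      fun x hx q hq => hS.prop.subset_halfspaceInter hx q (Finset.mem_of_mem_erase hq), hZ⟩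
  exact Finset.notMem_erase p S (hS.le_of_le herase (Finset.erase_subset p S) hp)

theorem IsSeparatingSystem.insert_erase [DecidableEq (StrongDual ℝ E × ℝ)]
    (hS : IsSeparatingSystem K Z S) (hp : p ∈ S) {t : ℝ} (ht : p.2 ≤ t)
    (hZ : ∀ w ∈ Z, (∀ q ∈ S.erase p, q.1 w < q.2) → t ≤ p.1 w) :
    IsSeparatingSystem K Z (insert (p.1, t) (S.erase p)) where
  ne_zero := (Finset.forall_mem_insert _ _ _).2
    ⟨hS.ne_zero p hp, fun q hq => hS.ne_zero q (Finset.mem_of_mem_erase hq)⟩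
  subset_halfspaceInter x hx := (Finset.forall_mem_insert _ _ _).2
    ⟨(hS.subset_halfspaceInter hx p hp).trans ht,
      fun q hq => hS.subset_halfspaceInter hx q (Finset.mem_of_mem_erase hq)⟩
  exists_le w hw := by
    rw [Finset.exists_mem_insert]
    by_contra! hlt
    exact hlt.1.not_ge (hZ w hw hlt.2)

end SeparatingSystem

section MaximalFree

variable {E : Type*} [NormedAddCommGroup E] [NormedSpace ℝ E] {L K : Set E} {R : ℝ}
  {S : Finset (StrongDual ℝ E × ℝ)}

theorem eq_of_maximal_isFreeConvex_of_subset_ball (hK : Maximal (IsFreeConvex L) K)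
    (hne : K.Nonempty) (hKR : K ⊆ Metric.ball 0 R) {C : Set E} (hCcl : IsClosed C)
    (hC : Convex ℝ C) (hKC : K ⊆ C) (hCL : interior C ∩ (L ∩ Metric.closedBall 0 R) = ∅) :
    K = C := by
  have hCR : K = C ∩ Metric.closedBall 0 R := by
    refine hK.eq_of_subset ⟨hCcl.inter Metric.isClosed_closedBall,
      hC.inter (convex_closedBall 0 R), ?_⟩
      (Set.subset_inter hKC (hKR.trans Metric.ball_subset_closedBall))
    refine Set.eq_empty_of_forall_notMem fun z ⟨hz, hzL⟩ => Set.notMem_empty z (hCL ▸ ?_)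
    exact ⟨interior_mono Set.inter_subset_left hz, hzL, (interior_subset hz).2⟩
  -- `C` is connected, and it cannot cross the boundary of the ball.
  have hCball : C ⊆ Metric.ball 0 R := by
    refine hC.isPreconnected.subset_of_closure_inter_subset Metric.isOpen_ball ?_ ?_
    · exact hne.mono (Set.subset_inter hKC hKR)
    · rintro x ⟨hx, hxC⟩
      exact hKR (hCR ▸ ⟨hxC, Metric.closure_ball_subset_closedBall hx⟩)
  rw [hCR, Set.inter_eq_left.2 (hCball.trans Metric.ball_subset_closedBall)]

theorem IsSeparatingSystem.eq_halfspaceInter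
    (hS : IsSeparatingSystem K (L ∩ Metric.closedBall 0 R) S) (hK : Maximal (IsFreeConvex L) K)
    (hne : K.Nonempty) (hKR : K ⊆ Metric.ball 0 R) : K = halfspaceInter S := by
  refine eq_of_maximal_isFreeConvex_of_subset_ball hK hne hKR (isClosed_halfspaceInter S)
    (convex_halfspaceInter S) hS.subset_halfspaceInter ?_
  refine Set.eq_empty_of_forall_notMem fun z ⟨hzS, hzL⟩ => ?_
  obtain ⟨p, hp, hle⟩ := hS.exists_le z hzL
  exact (lt_of_mem_interior_halfspaceInter hzS hp (hS.ne_zero p hp)).not_ge hle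

theorem exists_tight_of_minimal (hK : Maximal (IsFreeConvex L) K) (hne : K.Nonempty)
    (hKR : K ⊆ Metric.ball 0 R) (hL : (L ∩ Metric.closedBall 0 R).Finite)
    (hS : Minimal (IsSeparatingSystem K (L ∩ Metric.closedBall 0 R)) S)
    {p : StrongDual ℝ E × ℝ} (hp : p ∈ S) :
    ∃ z ∈ L, p.1 z = p.2 ∧ ∀ q ∈ S, q ≠ p → q.1 z < q.2 := by
  classical
  -- Push the inequality `p` outwards until it meets the first point `z` of `L` that it alone
  -- excludes. The relaxed system still cuts out `K`, hence `z ∈ K`.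
  obtain ⟨z, ⟨hzL, hz⟩, hzmin⟩ := Set.exists_min_image
    {z ∈ L ∩ Metric.closedBall 0 R | ∀ q ∈ S.erase p, q.1 z < q.2} (fun z => p.1 z)
    (hL.subset (Set.sep_subset _ _)) (exists_mem_forall_lt_of_minimal hS hp)
  have hpz : p.2 ≤ p.1 z := by
    obtain ⟨q, hq, hle⟩ := hS.prop.exists_le z hzL
    obtain rfl : q = p := by
      by_contra hqp
      exact hle.not_gt (hz q (Finset.mem_erase.2 ⟨hqp, hq⟩))
    exact hle
  have hrelax : IsSeparatingSystem K (L ∩ Metric.closedBall 0 R)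
      (insert (p.1, p.1 z) (S.erase p)) :=
    hS.prop.insert_erase hp hpz fun w hw hwlt => hzmin w ⟨hw, hwlt⟩
  have hzK : z ∈ K := by
    rw [hrelax.eq_halfspaceInter hK hne hKR]
    exact (Finset.forall_mem_insert _ _ _).2 ⟨le_rfl, fun q hq => (hz q hq).le⟩
  exact ⟨z, hzL.1, (hS.prop.subset_halfspaceInter hzK p hp).antisymm hpz,
    fun q hq hqp => hz q (Finset.mem_erase.2 ⟨hqp, hq⟩)⟩

theorem exists_tight_halfspaceInter_eq (hK : Maximal (IsFreeConvex L) K)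
    (hint : (interior K).Nonempty) (hKR : K ⊆ Metric.ball 0 R)
    (hL : (L ∩ Metric.closedBall 0 R).Finite) :
    ∃ S : Finset (StrongDual ℝ E × ℝ), K = halfspaceInter S ∧ (∀ p ∈ S, p.1 ≠ 0) ∧
      ∀ p ∈ S, ∃ z ∈ L, p.1 z = p.2 ∧ ∀ q ∈ S, q ≠ p → q.1 z < q.2 := by
  have hne : K.Nonempty := hint.mono interior_subset
  have hKZ : interior K ∩ (L ∩ Metric.closedBall 0 R) = ∅ := by
    rw [← Set.inter_assoc, hK.prop.2.2, Set.empty_inter]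
  obtain ⟨S, hS⟩ := exists_minimal_of_wellFoundedLT _
    (exists_isSeparatingSystem hK.prop.2.1 hint hL hKZ)
  exact ⟨S, hS.prop.eq_halfspaceInter hK hne hKR, hS.prop.ne_zero,
    fun p hp => exists_tight_of_minimal hK hne hKR hL hS hp⟩

end MaximalFree

section Lattice

theorem card_le_card_of_midpoint_mem {E κ : Type*} [AddCommGroup E] [Module ℝ E]
    [TopologicalSpace E] [Fintype κ] {L : Set E} {S : Finset (StrongDual ℝ E × ℝ)} (color : E → κ)
    (hmid : ∀ x ∈ L, ∀ y ∈ L, color x = color y → midpoint ℝ x y ∈ L)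
    (hfree : interior (halfspaceInter S) ∩ L = ∅)
    (htight : ∀ p ∈ S, ∃ z ∈ L, p.1 z = p.2 ∧ ∀ q ∈ S, q ≠ p → q.1 z < q.2) :
    S.card ≤ Fintype.card κ := by
  choose! z hzL hzeq hzlt using htight
  refine Finset.card_le_card_of_injOn (color ∘ z) (t := Finset.univ) (fun _ _ => by simp) ?_
  intro p hp q hq hpq
  by_contra hne
  -- Each inequality is strict at `z p` or at `z q`, so the midpoint lies in the interior.
  refine Set.notMem_empty (midpoint ℝ (z p) (z q))
    (hfree ▸ ⟨?_, hmid _ (hzL p hp) _ (hzL q hq) hpq⟩)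
  refine mem_interior_halfspaceInter_of_forall_lt fun r hr => ?_
  have hle : ∀ s ∈ S, r.1 (z s) ≤ r.2 := fun s hs =>
    (eq_or_ne r s).elim (fun h => h ▸ (hzeq r hr).le) fun h => (hzlt s hs r hr h).le
  have hval : r.1 (midpoint ℝ (z p) (z q)) = (r.1 (z p) + r.1 (z q)) / 2 := by
    simp [midpoint_eq_smul_add]
    ring
  rw [hval]
  rcases eq_or_ne r p with rfl | hrp
  · linarith [hle r hr, hzlt q hq r hr hne]
  · linarith [hle q hq, hzlt p hp r hr hrp]

variable {d : ℕ}

/-- The class of a lattice point in `ℤ^d / 2ℤ^d`; on other points it is the class of the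
coordinatewise floor. -/
noncomputable def parity (x : Fin d → ℝ) : Fin d → ZMod 2 :=
  fun i => (⌊x i⌋ : ZMod 2)

theorem midpoint_mem_intLattice {x y : Fin d → ℝ} (hx : x ∈ intLattice d) (hy : y ∈ intLattice d)
    (hxy : parity x = parity y) : midpoint ℝ x y ∈ intLattice d := by
  obtain ⟨a, rfl⟩ := hx
  obtain ⟨b, rfl⟩ := hy
  have hdvd : ∀ i, (2 : ℤ) ∣ b i - a i := fun i =>
    (ZMod.intCast_eq_intCast_iff_dvd_sub _ _ 2).1 (by simpa [parity] using congrFun hxy i)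
  choose w hw using hdvd
  refine ⟨a + w, funext fun i => ?_⟩
  have hwi : (b i : ℝ) - a i = 2 * w i := by exact_mod_cast hw i
  simp only [midpoint_eq_smul_add, Pi.add_apply, Pi.smul_apply, smul_eq_mul, invOf_eq_inv]
  push_cast
  linarith

theorem finite_intLattice_inter {B : Set (Fin d → ℝ)} (hB : Bornology.IsBounded B) :
    (intLattice d ∩ B).Finite := by
  let coe : (Fin d → ℤ) → (Fin d → ℝ) := fun z i => z i
  have hcoe : Isometry coe := Isometry.piMap (fun _ => ((↑) : ℤ → ℝ)) fun _ =>
    Isometry.of_dist_eq Int.dist_cast_real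
  have hfin : (coe ⁻¹' B).Finite :=
    (hcoe.antilipschitz.isBounded_preimage hB).isCompact_closure.finite_of_discrete.subset
      subset_closure
  exact (hfin.image coe).subset (Set.image_preimage_eq_range_inter).ge

theorem IsMaxLatticeFree.maximal_isFreeConvex {K : Set (Fin d → ℝ)} (hK : IsMaxLatticeFree d K) :
    Maximal (IsFreeConvex (intLattice d)) K :=
  ⟨hK.1, fun K' hK' hle => (hK.2 K' hK' hle).le⟩

theorem setOf_isFacet_halfspaceInter_subset {S : Finset (StrongDual ℝ (Fin d → ℝ) × ℝ)}
    (hS : ∀ p ∈ S, p.1 ≠ 0) :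
    {F | IsFacet d (halfspaceInter S) F} ⊆ tightFace S '' S := by
  rintro F ⟨hne, hext, hconv, hdim⟩
  obtain ⟨p, hp, rfl⟩ :=
    exists_eq_tightFace_of_isExtreme hS hne hext hconv (by simpa using hdim)
  exact ⟨p, hp, rfl⟩

end Lattice

/-- A bounded `d`-dimensional maximal lattice-free set in `ℝ^d`
is a polytope with at most `2^d` facets. -/
theorem stmt_16 (d : ℕ) (K : Set (Fin d → ℝ))
    (hK : IsMaxLatticeFree d K) (hdim : affineSpan ℝ K = ⊤)
    (hbd : Bornology.IsBounded K) :
    IsPolytope d K ∧ {F : Set (Fin d → ℝ) | IsFacet d K F}.Finite ∧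
      {F : Set (Fin d → ℝ) | IsFacet d K F}.ncard ≤ 2 ^ d := by
  obtain ⟨R, hR⟩ := hbd.subset_ball 0
  obtain ⟨S, rfl, hS, htight⟩ := exists_tight_halfspaceInter_eq hK.maximal_isFreeConvex
    (hK.1.2.1.interior_nonempty_iff_affineSpan_eq_top.2 hdim) hR
    (finite_intLattice_inter Metric.isBounded_closedBall)
  have hcard : S.card ≤ 2 ^ d := by
    simpa using card_le_card_of_midpoint_mem parity
      (fun x hx y hy => midpoint_mem_intLattice hx hy) hK.1.2.2 htight
  have hfacets := setOf_isFacet_halfspaceInter_subset hS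
  have hfin := S.finite_toSet.image (tightFace S)
  refine ⟨exists_finset_halfspaceInter_eq_convexHull
    (Metric.isCompact_of_isClosed_isBounded hK.1.1 hbd), hfin.subset hfacets, ?_⟩
  calc {F | IsFacet d (halfspaceInter S) F}.ncard
      ≤ (tightFace S '' S).ncard := Set.ncard_le_ncard hfacets hfin
    _ ≤ S.card := (Set.ncard_image_le S.finite_toSet).trans_eq (Set.ncard_coe_finset S)
    _ ≤ 2 ^ d := hcard
end
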